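/- Let (X, ρ) be a metric space and γ : [a,b] → X a continuous mapping such that for every Lipschitz function h : X → ℝ the composition h ∘ γ : [a,b] → ℝ is absolutely continuous. Then γ itself is absolutely continuous. -/

import Mathlib

/-- A mapping `γ` of the segment `[a,b]` into a metric space is absolutely continuous
if for every `ε > 0` there is `δ > 0` such that for every finite collection of pairwise
disjoint intervals `(cᵢ, dᵢ) ⊆ [a,b]` with `∑ (dᵢ - cᵢ) < δ` one has
`∑ dist (γ cᵢ) (γ dᵢ) < ε`. -/
def AbsContOn {X : Type*} [MetricSpace X] (γ : ℝ → X) (a b : ℝ) : Prop :=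
  ∀ ε > (0 : ℝ), ∃ δ > (0 : ℝ), ∀ (n : ℕ) (c d : Fin n → ℝ),
    (∀ i, a ≤ c i ∧ c i < d i ∧ d i ≤ b) →
    (Pairwise fun i j => Disjoint (Set.Ioo (c i) (d i)) (Set.Ioo (c j) (d j))) →
    ∑ i, (d i - c i) < δ →
    ∑ i, dist (γ (c i)) (γ (d i)) < ε

/-!
Applying the uniform boundedness principle to the `ℓ¹`-combinations of all bounded `1`-Lipschitz
tests gives one constant `C` with `Var (h ∘ γ) ≤ C` for every `1`-Lipschitz `h` with `|h| ≤ 1`.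
The core of the argument is the bound `∫ sup_k |(φ_k ∘ γ)'| ≤ 2 C` for `1`-Lipschitz `φ_k`.
For finitely many `φ_k`, forming a curve `G = (φ_k ∘ γ)_k`, split the interval according to the
first `k` at which `|G_k'|` is largest. Times at which `G` crosses itself transversally form a
countable set, and tangential crossings stay within one piece, so the images of the pieces under
`G` are disjoint, and compact subsets of them are at positive distance, say `≥ 2 σ` with `σ ≤ 1`.
The waves `σ sin (φ_k / σ)` and `σ cos (φ_k / σ)`, whose amplitude is at most half this distance,
glue across the pieces to two `1`-Lipschitz tests bounded by `1`, and `|sin| + |cos| ≥ 1` recovers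
`|G_k'|` from their derivatives along `γ`. Finally `φ_k = dist · x_k` with `(x_k)` dense in the
curve bounds `dist (γ c) (γ d)` by the integral of `sup_k |(φ_k ∘ γ)'|` over `[c, d]`.
-/

open Set Filter Function Topology MeasureTheory
open scoped NNReal ENNReal

namespace AbsContOn

variable {X : Type*} [MetricSpace X] {f : ℝ → X} {a b : ℝ}

lemma exists_forall_finset_sum_dist_lt (hf : AbsContOn f a b) {ε : ℝ} (hε : 0 < ε) :
    ∃ δ > 0, ∀ {ι : Type} (S : Finset ι) (c d : ι → ℝ),
      (∀ i ∈ S, a ≤ c i ∧ c i ≤ d i ∧ d i ≤ b) →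
      (S : Set ι).PairwiseDisjoint (fun i ↦ Ioo (c i) (d i)) →
      ∑ i ∈ S, (d i - c i) < δ → ∑ i ∈ S, dist (f (c i)) (f (d i)) < ε := by
  classical
  obtain ⟨δ, hδ, h⟩ := hf ε hε
  refine ⟨δ, hδ, fun {ι} S c d hS hdisj hlen ↦ ?_⟩
  let T : Finset ι := S.filter fun i ↦ c i ≠ d i
  let e : Fin T.card ≃ T := T.equivFin.symm
  have mem_S (i : T) : (i : ι) ∈ S := (Finset.mem_filter.1 i.2).1
  have sum_eq (F : ι → ℝ) (hF : ∀ i, c i = d i → F i = 0) :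
      ∑ i, F (e i) = ∑ i ∈ S, F i := by
    rw [Equiv.sum_comp e (fun i : T ↦ F i), Finset.sum_coe_sort T F]
    exact Finset.sum_filter_of_ne fun i _ hi ↦ mt (hF i) hi
  rw [← sum_eq _ fun i hi ↦ by rw [hi, dist_self]]
  refine h _ (fun i ↦ c (e i)) (fun i ↦ d (e i)) (fun i ↦ ?_) (fun i j hij ↦ ?_) ?_
  · obtain ⟨hac, hcd, hdb⟩ := hS _ (mem_S (e i))
    exact ⟨hac, hcd.lt_of_ne (Finset.mem_filter.1 (e i).2).2, hdb⟩
  · exact hdisj (mem_S (e i)) (mem_S (e j)) fun h ↦ hij (e.injective (Subtype.ext h))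
  · rwa [sum_eq (fun i ↦ d i - c i) fun i hi ↦ by rw [hi, sub_self]]

lemma absolutelyContinuousOnInterval (hf : AbsContOn f a b) (hab : a ≤ b) :
    AbsolutelyContinuousOnInterval f a b := by
  rw [absolutelyContinuousOnInterval_iff]
  intro ε hε
  obtain ⟨δ, hδ, h⟩ := hf.exists_forall_finset_sum_dist_lt hε
  refine ⟨δ, hδ, fun ⟨n, I⟩ ⟨hmem, hdisj⟩ hlen ↦ ?_⟩
  simp only [uIcc_of_le hab] at hmem
  have dist_min_max (i : ℕ) :
      dist (f (min (I i).1 (I i).2)) (f (max (I i).1 (I i).2)) = dist (f (I i).1) (f (I i).2) := by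
    rcases le_total (I i).1 (I i).2 with hle | hle
    · rw [min_eq_left hle, max_eq_right hle]
    · rw [min_eq_right hle, max_eq_left hle, dist_comm]
  simp_rw [← dist_min_max]
  refine h _ _ _ (fun i hi ↦ ?_) (hdisj.mono fun i ↦ Ioo_subset_Ioc_self) ?_
  · obtain ⟨h₁, h₂⟩ := hmem i hi
    exact ⟨le_min h₁.1 h₂.1, min_le_max, max_le h₁.2 h₂.2⟩
  · simpa only [max_sub_min_eq_abs', Real.dist_eq] using hlen

lemma of_absolutelyContinuousOnInterval (hf : AbsolutelyContinuousOnInterval f a b) :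
    AbsContOn f a b := by
  rw [absolutelyContinuousOnInterval_iff] at hf
  intro ε hε
  obtain ⟨δ, hδ, h⟩ := hf ε hε
  refine ⟨δ, hδ, fun n c d hcd hdisj hlen ↦ ?_⟩
  let I (i : ℕ) : ℝ × ℝ := if hi : i < n then (c ⟨i, hi⟩, d ⟨i, hi⟩) else (0, 0)
  have I_val (i : Fin n) : I i = (c i, d i) := by simp [I]
  have hI : (n, I) ∈ AbsolutelyContinuousOnInterval.disjWithin a b := by
    refine ⟨fun i hi ↦ ?_, fun i hi j hj hij ↦ ?_⟩
    · lift i to Fin n using Finset.mem_range.1 hi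
      obtain ⟨hac, hlt, hdb⟩ := hcd i
      simp only [I_val]
      exact ⟨Icc_subset_uIcc ⟨hac, hlt.le.trans hdb⟩, Icc_subset_uIcc ⟨hac.trans hlt.le, hdb⟩⟩
    · lift i to Fin n using Finset.mem_range.1 hi
      lift j to Fin n using Finset.mem_range.1 hj
      have hioo := hdisj fun h : i = j ↦ hij (congrArg Fin.val h)
      simp only [onFun, I_val, uIoc_of_le (hcd _).2.1.le]
      rwa [Ioc_disjoint_Ioc, ← Ioo_disjoint_Ioo]
  have key := h (n, I) hI
  simp only [Finset.sum_range, I_val] at key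
  refine key (lt_of_eq_of_lt (Finset.sum_congr rfl fun i _ ↦ ?_) hlen)
  rw [dist_comm, Real.dist_eq, abs_of_pos (sub_pos.2 (hcd i).2.1)]

lemma of_lt (hba : b < a) : AbsContOn f a b := fun ε hε ↦ by
  refine ⟨1, one_pos, fun n c d hcd _ _ ↦ ?_⟩
  have : IsEmpty (Fin n) :=
    ⟨fun i ↦ hba.not_ge ((hcd i).1.trans ((hcd i).2.1.le.trans (hcd i).2.2))⟩
  rwa [Finset.univ_eq_empty, Finset.sum_empty]

end AbsContOn

section Variation

variable {f : ℝ → ℝ} {a b : ℝ}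

lemma norm_deriv_le_of_eventually_norm_sub_le {v : ℝ → ℝ} {x : ℝ} (hf : DifferentiableAt ℝ f x)
    (hv : DifferentiableAt ℝ v x) (hle : ∀ᶠ y in 𝓝 x, ‖f y - f x‖ ≤ ‖v y - v x‖) :
    ‖deriv f x‖ ≤ ‖deriv v x‖ := by
  refine le_of_tendsto_of_tendsto hf.hasDerivAt.tendsto_slope.norm
    hv.hasDerivAt.tendsto_slope.norm ?_
  filter_upwards [nhdsWithin_le_nhds hle] with y hy
  rw [slope_def_field, slope_def_field, norm_div, norm_div]
  gcongr

lemma lintegral_enorm_deriv_le_of_monotoneOn (hf : MonotoneOn f (Icc a b)) (hab : a ≤ b) :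
    ∫⁻ t in Icc a b, ‖deriv f t‖ₑ ≤ ENNReal.ofReal (f b - f a) := by
  obtain ⟨G, hG_deriv, hG_meas, hG_le⟩ :=
    hf.exists_tendsto_deriv_liminf_lintegral_enorm_le hab
  calc ∫⁻ t in Icc a b, ‖deriv f t‖ₑ
      = ∫⁻ t in Icc a b, liminf (fun n ↦ ‖G n t‖ₑ) atTop :=
        lintegral_congr_ae (hG_deriv.mono fun t ht ↦ ht.enorm.liminf_eq.symm)
    _ ≤ liminf (fun n ↦ ∫⁻ t in Icc a b, ‖G n t‖ₑ) atTop :=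
        lintegral_liminf_le' fun n ↦ (hG_meas n).enorm
    _ ≤ ENNReal.ofReal (f b - f a) := hG_le

lemma norm_sub_le_norm_variationOnFromTo_sub {s : Set ℝ} {x y : ℝ}
    (hf : LocallyBoundedVariationOn f s) (ha : a ∈ s) (hx : x ∈ s) (hy : y ∈ s) :
    ‖f y - f x‖ ≤ ‖variationOnFromTo f s a y - variationOnFromTo f s a x‖ := by
  rcases le_total x y with hxy | hyx
  · exact (variationOnFromTo.abs_sub_le_sub_of_le hf ha hx hy hxy).trans (le_abs_self _)
  · rw [norm_sub_rev, norm_sub_rev (variationOnFromTo f s a y)]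
    exact (variationOnFromTo.abs_sub_le_sub_of_le hf ha hy hx hyx).trans (le_abs_self _)

theorem lintegral_enorm_deriv_le_eVariationOn (f : ℝ → ℝ) (a b : ℝ) :
    ∫⁻ t in Icc a b, ‖deriv f t‖ₑ ≤ eVariationOn f (Icc a b) := by
  rcases lt_or_ge b a with hba | hab
  · simp [Icc_eq_empty_of_lt hba]
  rcases eq_or_ne (eVariationOn f (Icc a b)) ⊤ with htop | hbv
  · exact htop ▸ le_top
  have hl : LocallyBoundedVariationOn f (Icc a b) :=
    BoundedVariationOn.locallyBoundedVariationOn hbv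
  let v := variationOnFromTo f (Icc a b) a
  have hv : MonotoneOn v (Icc a b) := variationOnFromTo.monotoneOn hl (left_mem_Icc.2 hab)
  have deriv_le : ∀ᵐ t ∂volume.restrict (Icc a b), ‖deriv f t‖ₑ ≤ ‖deriv v t‖ₑ := by
    rw [← restrict_Ioo_eq_restrict_Icc, ae_restrict_iff' measurableSet_Ioo]
    filter_upwards [hl.ae_differentiableWithinAt_of_mem, hv.ae_differentiableWithinAt_of_mem]
      with t hft hvt ht
    have htI : t ∈ Icc a b := Ioo_subset_Icc_self ht
    have hnhds : Icc a b ∈ 𝓝 t := Icc_mem_nhds ht.1 ht.2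
    rw [enorm_le_iff_norm_le]
    refine norm_deriv_le_of_eventually_norm_sub_le ((hft htI).differentiableAt hnhds)
      ((hvt htI).differentiableAt hnhds) ?_
    filter_upwards [hnhds] with y hy
    exact norm_sub_le_norm_variationOnFromTo_sub hl (left_mem_Icc.2 hab)
      htI hy
  calc ∫⁻ t in Icc a b, ‖deriv f t‖ₑ
      ≤ ∫⁻ t in Icc a b, ‖deriv v t‖ₑ := lintegral_mono_ae deriv_le
    _ ≤ ENNReal.ofReal (v b - v a) := lintegral_enorm_deriv_le_of_monotoneOn hv hab
    _ = eVariationOn f (Icc a b) := by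
        simp only [v, variationOnFromTo.self, sub_zero, variationOnFromTo.eq_of_le _ _ hab,
          inter_self, ENNReal.ofReal_toReal hbv]

end Variation

section UniformBoundedness

variable {α E F : Type*} [NormedAddCommGroup E] [NormedSpace ℝ E]
  [NormedAddCommGroup F] [NormedSpace ℝ F]

/-- The seminorm on `E` sending `x` to the variation of `t ↦ Φ t x` along the finite sequence
`u 0, …, u n`; suprema of these seminorms express total variation. -/
noncomputable def variationSeminorm (Φ : α → E →L[ℝ] F) (n : ℕ) (u : ℕ → α) : Seminorm ℝ E :=
  ∑ i ∈ Finset.range n, (normSeminorm ℝ F).comp (Φ (u (i + 1)) - Φ (u i)).toLinearMap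

lemma variationSeminorm_apply (Φ : α → E →L[ℝ] F) (n : ℕ) (u : ℕ → α) (x : E) :
    variationSeminorm Φ n u x = ∑ i ∈ Finset.range n, dist (Φ (u (i + 1)) x) (Φ (u i) x) := by
  induction n with
  | zero => rfl
  | succ n ih =>
    rw [Finset.sum_range_succ, ← ih, variationSeminorm, Finset.sum_range_succ, dist_eq_norm]
    rfl

lemma continuous_variationSeminorm (Φ : α → E →L[ℝ] F) (n : ℕ) (u : ℕ → α) :
    Continuous (variationSeminorm Φ n u) := by
  simp only [funext (variationSeminorm_apply Φ n u)]
  fun_prop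

lemma ofReal_variationSeminorm (Φ : α → E →L[ℝ] F) (n : ℕ) (u : ℕ → α) (x : E) :
    ENNReal.ofReal (variationSeminorm Φ n u x) =
      ∑ i ∈ Finset.range n, edist (Φ (u (i + 1)) x) (Φ (u i) x) := by
  simp only [variationSeminorm_apply, edist_dist]
  exact ENNReal.ofReal_sum_of_nonneg fun _ _ ↦ dist_nonneg

theorem exists_eVariationOn_apply_le [CompleteSpace E] [LinearOrder α] (Φ : α → E →L[ℝ] F)
    {s : Set α} (hΦ : ∀ x, BoundedVariationOn (fun t ↦ Φ t x) s) :
    ∃ C : ℝ≥0, ∀ x, eVariationOn (fun t ↦ Φ t x) s ≤ C * ‖x‖ₑ := by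
  let p (P : ℕ × {u : ℕ → α // Monotone u ∧ ∀ i, u i ∈ s}) : Seminorm ℝ E :=
    variationSeminorm Φ P.1 P.2
  have bdd : BddAbove (range p) := by
    refine Seminorm.bddAbove_range_iff.2 fun x ↦ ⟨(eVariationOn (fun t ↦ Φ t x) s).toReal, ?_⟩
    rintro _ ⟨⟨n, u, hu, hus⟩, rfl⟩
    refine (ENNReal.ofReal_le_iff_le_toReal (hΦ x)).1 ?_
    exact (ofReal_variationSeminorm Φ n u x).trans_le (eVariationOn.sum_le hu hus)
  have cont : Continuous ⇑(⨆ P, p P) := by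
    rw [Seminorm.coe_iSup_eq bdd]
    exact Seminorm.continuous_iSup p (fun P ↦ continuous_variationSeminorm Φ _ _) bdd
  obtain ⟨C, hC, hle⟩ := Seminorm.bound_of_continuous_normedSpace _ cont
  refine ⟨C.toNNReal, fun x ↦ iSup_le fun P ↦ ?_⟩
  calc ∑ i ∈ Finset.range P.1, edist (Φ (P.2.1 (i + 1)) x) (Φ (P.2.1 i) x)
      = ENNReal.ofReal (p P x) := (ofReal_variationSeminorm Φ _ _ x).symm
    _ ≤ ENNReal.ofReal (C * ‖x‖) := by
        gcongr
        exact (le_ciSup bdd P x).trans (hle x)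
    _ = C.toNNReal * ‖x‖ₑ := by
        rw [ENNReal.ofReal_mul hC.le, ofReal_norm]
        rfl

end UniformBoundedness

section WeightedSum

variable {ι : Type*} {w v : ι → ℝ} {K L M : ℝ}

/-- The functional `a ↦ ∑ i, a i * w i` on `ℓ¹` attached to a family of weights bounded by `K`. -/
noncomputable def weightedSum (w : ι → ℝ) (hK : 0 ≤ K) (hw : ∀ i, ‖w i‖ ≤ K) :
    lp (fun _ : ι ↦ ℝ) 1 →L[ℝ] ℝ :=
  lp.tsumCLM ℝ ι ℝ ∘L lp.mapCLM 1 (fun i ↦ ContinuousLinearMap.toSpanSingleton ℝ (w i)) hK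
    fun i ↦ (ContinuousLinearMap.norm_toSpanSingleton (w i)).trans_le (hw i)

lemma norm_weightedSum_le (hK : 0 ≤ K) (hw : ∀ i, ‖w i‖ ≤ K) : ‖weightedSum w hK hw‖ ≤ K :=
  (ContinuousLinearMap.opNorm_comp_le _ _).trans <|
    (mul_le_of_le_one_left (norm_nonneg _) lp.norm_tsumCLM_le).trans (lp.norm_mapCLM_le _ _ _ _)

lemma weightedSum_sub (hK : 0 ≤ K) (hL : 0 ≤ L) (hM : 0 ≤ M) (hw : ∀ i, ‖w i‖ ≤ K)
    (hv : ∀ i, ‖v i‖ ≤ L) (hwv : ∀ i, ‖w i - v i‖ ≤ M) :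
    weightedSum w hK hw - weightedSum v hL hv = weightedSum (fun i ↦ w i - v i) hM hwv := by
  ext a
  rw [sub_apply, weightedSum, weightedSum, weightedSum,
    ContinuousLinearMap.comp_apply, ContinuousLinearMap.comp_apply, ContinuousLinearMap.comp_apply,
    ← map_sub]
  congr 1
  ext i
  exact (mul_sub _ _ _).symm

lemma weightedSum_single [DecidableEq ι] (hK : 0 ≤ K) (hw : ∀ i, ‖w i‖ ≤ K) (i : ι) :
    weightedSum w hK hw (lp.single 1 i 1) = w i := by
  have mul_single (j : ι) : (lp.single 1 i (1 : ℝ) : ι → ℝ) j • w j =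
      (Pi.single i (w i) : ι → ℝ) j := by
    rw [lp.single_apply]
    rcases eq_or_ne j i with rfl | hj
    · simp only [Pi.single_eq_same, one_smul]
    · simp only [Pi.single_eq_of_ne hj, zero_smul]
  exact (tsum_congr mul_single).trans (tsum_pi_single i (w i))

end WeightedSum

section UniformVariation

variable {α X : Type*} [LinearOrder α] [PseudoMetricSpace X]

lemma boundedVariationOn_comp_of_lipschitzWith {γ : α → X} {s : Set α}
    (hγ : ∀ h : X → ℝ, LipschitzWith 1 h → BoundedVariationOn (h ∘ γ) s) {h : X → ℝ} {K : ℝ≥0}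
    (hh : LipschitzWith K h) : BoundedVariationOn (h ∘ γ) s := by
  have hK : 0 < (K : ℝ) + 1 := by positivity
  have lipschitz_div : LipschitzWith 1 (fun x ↦ h x / (K + 1)) := by
    refine LipschitzWith.of_dist_le_mul fun x y ↦ ?_
    rw [Real.dist_eq, ← sub_div, abs_div, abs_of_pos hK, div_le_iff₀ hK, NNReal.coe_one, one_mul]
    calc |h x - h y| ≤ K * dist x y := hh.dist_le_mul x y
      _ ≤ dist x y * (K + 1) := by nlinarith [dist_nonneg (x := x) (y := y)]
  convert! (lipschitzWith_smul ((K : ℝ) + 1)).comp_boundedVariationOn (hγ _ lipschitz_div) using 1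
  exact funext fun t ↦ (mul_div_cancel₀ (h (γ t)) hK.ne').symm

lemma lipschitzWith_weightedSum_apply {ι : Type*} {g : ι → X → ℝ}
    (hg : ∀ i, LipschitzWith 1 (g i)) (hg1 : ∀ i x, ‖g i x‖ ≤ 1) (a : lp (fun _ : ι ↦ ℝ) 1) :
    LipschitzWith ‖a‖₊ (fun x ↦ weightedSum (g · x) zero_le_one (hg1 · x) a) := by
  refine LipschitzWith.of_dist_le_mul fun x y ↦ ?_
  have dist_le (i : ι) : ‖g i x - g i y‖ ≤ dist x y := by
    simpa only [NNReal.coe_one, one_mul, dist_eq_norm] using (hg i).dist_le_mul x y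
  rw [Real.dist_eq, ← sub_apply, weightedSum_sub _ _ dist_nonneg _ _ dist_le, mul_comm]
  exact ContinuousLinearMap.le_of_opNorm_le _ (norm_weightedSum_le _ _) a

theorem exists_forall_eVariationOn_comp_le {ι : Type*} {γ : α → X} {s : Set α}
    (hγ : ∀ h : X → ℝ, LipschitzWith 1 h → BoundedVariationOn (h ∘ γ) s) {g : ι → X → ℝ}
    (hg : ∀ i, LipschitzWith 1 (g i)) (hg1 : ∀ i x, ‖g i x‖ ≤ 1) :
    ∃ C : ℝ≥0, ∀ i, eVariationOn (g i ∘ γ) s ≤ C := by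
  classical
  have boundedVariation (a : lp (fun _ : ι ↦ ℝ) 1) :=
    boundedVariationOn_comp_of_lipschitzWith hγ (lipschitzWith_weightedSum_apply hg hg1 a)
  obtain ⟨C, hC⟩ := exists_eVariationOn_apply_le
    (fun t ↦ weightedSum (g · (γ t)) zero_le_one (hg1 · (γ t))) boundedVariation
  refine ⟨C, fun i ↦ ?_⟩
  have norm_single : ‖lp.single (E := fun _ : ι ↦ ℝ) 1 i 1‖ₑ = 1 := by
    rw [← ofReal_norm, lp.norm_single one_pos, norm_one, ENNReal.ofReal_one]
  simpa only [comp_def, weightedSum_single, norm_single, mul_one] using hC (lp.single 1 i 1)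

end UniformVariation

section Countable

lemma countable_setOf_not_accPt {Y : Type*} [TopologicalSpace Y] [SecondCountableTopology Y]
    (S : Set Y) : {x ∈ S | ¬ AccPt x (𝓟 S)}.Countable := by
  have : DiscreteTopology {x ∈ S | ¬ AccPt x (𝓟 S)} := by
    refine discreteTopology_subtype_iff.2 fun x hx ↦ le_bot_iff.1 ?_
    rw [← not_neBot.1 hx.2]
    exact inf_le_inf_left _ (principal_mono.2 fun y hy ↦ hy.1)
  exact countable_coe_iff.1 (TopologicalSpace.separableSpace_iff_countable.1 inferInstance)

lemma countable_of_forall_not_accPt {Y : Type*} [TopologicalSpace Y] [SecondCountableTopology Y]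
    {S : Set Y} (hS : ∀ x ∈ S, ¬ AccPt x (𝓟 S)) : S.Countable :=
  sep_eq_self_iff_mem_true.2 hS ▸ countable_setOf_not_accPt S

variable {E F : Type*} [NormedAddCommGroup E] [NormedSpace ℝ E]
  [NormedAddCommGroup F] [NormedSpace ℝ F]

theorem countable_setOf_eq_and_injective_hasFDerivAt [FiniteDimensional ℝ E] (f : E → F) (c : F) :
    {x | f x = c ∧ ∃ f' : E →L[ℝ] F, HasFDerivAt f f' x ∧ Injective f'}.Countable := by
  have : ProperSpace E := FiniteDimensional.proper_real E
  refine countable_of_forall_not_accPt fun x hx hacc ↦ ?_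
  obtain ⟨-, f', hf', hinj⟩ := hx
  obtain ⟨K, -, hK⟩ := f'.toLinearMap.injective_iff_antilipschitz.1 hinj
  obtain ⟨y, hy, hyc⟩ :=
    ((accPt_iff_frequently_nhdsNE.1 hacc).and_eventually (hf'.eventually_ne ⟨K, hK⟩)).exists
  exact hyc hy.1

theorem countable_setOf_exists_linearIndependent_deriv (γ : ℝ → E) :
    {s | ∃ t, γ s = γ t ∧ DifferentiableAt ℝ γ s ∧ DifferentiableAt ℝ γ t ∧
      LinearIndependent ℝ ![deriv γ s, deriv γ t]}.Countable := by
  refine ((countable_setOf_eq_and_injective_hasFDerivAt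
    (fun p : ℝ × ℝ ↦ γ p.1 - γ p.2) 0).image Prod.fst).mono ?_
  rintro s ⟨t, hst, hs, ht, hli⟩
  refine ⟨(s, t), ⟨sub_eq_zero.2 hst, _, (hs.hasFDerivAt.comp (s, t) hasFDerivAt_fst).sub
    (ht.hasFDerivAt.comp (s, t) hasFDerivAt_snd), ?_⟩, rfl⟩
  refine (injective_iff_map_eq_zero _).2 fun ⟨u, v⟩ huv ↦ ?_
  have huv' : u • deriv γ s + (-v) • deriv γ t = 0 := by
    simpa [sub_eq_add_neg] using huv
  obtain ⟨hu, hv⟩ := LinearIndependent.pair_iff.1 hli u (-v) huv'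
  rw [hu, neg_eq_zero.1 hv, Prod.mk_zero_zero]

end Countable

section Cones

variable {ι : Type*} [Fintype ι] [LinearOrder ι] [LocallyFiniteOrderBot ι] {v : ι → ℝ} {k : ι}

/-- The cone of vectors whose sup norm is attained at the coordinate `k` and at no earlier one.
These cones partition `ι → ℝ` and depend only on the line spanned by a nonzero vector. -/
def firstMaxCone (k : ι) : Set (ι → ℝ) :=
  disjointed (fun j ↦ {v | ‖v j‖ = ‖v‖}) k

lemma norm_apply_of_mem_firstMaxCone (hv : v ∈ firstMaxCone k) : ‖v k‖ = ‖v‖ :=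
  disjointed_subset _ k hv

lemma eq_of_mem_firstMaxCone {l : ι} (hk : v ∈ firstMaxCone k) (hl : v ∈ firstMaxCone l) :
    k = l :=
  by_contra fun hkl ↦ disjoint_left.1 (disjoint_disjointed _ hkl) hk hl

lemma exists_mem_firstMaxCone [Nonempty ι] (v : ι → ℝ) : ∃ k, v ∈ firstMaxCone k := by
  obtain ⟨j, hj⟩ := Finite.exists_max fun j ↦ ‖v j‖
  rw [← mem_iUnion]
  simp only [firstMaxCone, iUnion_disjointed]
  exact mem_iUnion.2 ⟨j, (norm_le_pi_norm v j).antisymm (pi_norm_le_iff_of_nonempty _ |>.2 hj)⟩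

lemma smul_mem_firstMaxCone {c : ℝ} (hc : c ≠ 0) (hv : v ∈ firstMaxCone k) :
    c • v ∈ firstMaxCone k := by
  simpa only [firstMaxCone, disjointed_eq_inter_compl, mem_inter_iff, mem_iInter, mem_compl_iff,
    mem_ofPred_eq, Pi.smul_apply, norm_smul, mul_right_inj' (norm_ne_zero_iff.2 hc)] using hv

lemma measurableSet_firstMaxCone (k : ι) : MeasurableSet (firstMaxCone k) := by
  have measurable (j : ι) : MeasurableSet {v : ι → ℝ | ‖v j‖ = ‖v‖} :=
    measurableSet_eq_fun (measurable_pi_apply j).norm measurable_norm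
  exact disjointedRec (p := MeasurableSet) (fun _ j h ↦ h.diff (measurable j)) (measurable k)

theorem exists_separated_partition_of_deriv_ne_zero (G : ℝ → ι → ℝ) :
    ∃ A : ι → Set ℝ, (∀ k, MeasurableSet (A k)) ∧
      Pairwise (fun k l ↦ Disjoint (G '' A k) (G '' A l)) ∧
      (∀ k, ∀ t ∈ A k, DifferentiableAt ℝ G t ∧ ‖deriv G t k‖ = ‖deriv G t‖) ∧
      ∀ᵐ t, deriv G t ≠ 0 → t ∈ ⋃ k, A k := by
  let N : Set ℝ := {s | ∃ t, G s = G t ∧ DifferentiableAt ℝ G s ∧ DifferentiableAt ℝ G t ∧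
    LinearIndependent ℝ ![deriv G s, deriv G t]}
  have hN : N.Countable := countable_setOf_exists_linearIndependent_deriv G
  have differentiableAt {t : ℝ} (ht : deriv G t ≠ 0) : DifferentiableAt ℝ G t :=
    by_contra fun h ↦ ht (deriv_zero_of_not_differentiableAt h)
  refine ⟨fun k ↦ {t | t ∉ N ∧ deriv G t ≠ 0 ∧ deriv G t ∈ firstMaxCone k}, fun k ↦ ?_,
    fun k l hkl ↦ disjoint_left.2 ?_, fun k t ht ↦ ?_, ?_⟩
  · exact hN.measurableSet.compl.inter <|
      ((measurable_deriv G) (measurableSet_singleton 0)).compl.inter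
        (measurable_deriv G (measurableSet_firstMaxCone k))
  · rintro _ ⟨s, ⟨hsN, hs0, hsk⟩, rfl⟩ ⟨t, ⟨-, ht0, htl⟩, hts⟩
    have dependent : ¬ LinearIndependent ℝ ![deriv G s, deriv G t] := fun h ↦
      hsN ⟨t, hts.symm, differentiableAt hs0, differentiableAt ht0, h⟩
    rw [LinearIndependent.pair_iff' hs0] at dependent
    push Not at dependent
    obtain ⟨c, hc⟩ := dependent
    have hc0 : c ≠ 0 := by
      rintro rfl
      exact ht0 (by rw [← hc, zero_smul])
    exact hkl (eq_of_mem_firstMaxCone (hc ▸ smul_mem_firstMaxCone hc0 hsk) htl)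
  · exact ⟨differentiableAt ht.2.1, norm_apply_of_mem_firstMaxCone ht.2.2⟩
  · filter_upwards [hN.ae_notMem volume] with t htN ht0
    obtain ⟨i, -⟩ := ne_iff.1 ht0
    have : Nonempty ι := ⟨i⟩
    obtain ⟨k, hk⟩ := exists_mem_firstMaxCone (deriv G t)
    exact mem_iUnion.2 ⟨k, htN, ht0, hk⟩

end Cones

section Glue

variable {X ι : Type*} [PseudoMetricSpace X]

lemma exists_lipschitzWith_one_eqOn {S : ι → Set X} {g : ι → X → ℝ}
    (hg : ∀ i j, ∀ x ∈ S i, ∀ y ∈ S j, |g i x - g j y| ≤ dist x y) :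
    ∃ h : X → ℝ, LipschitzWith 1 h ∧ ∀ i, EqOn h (g i) (S i) := by
  classical
  let f (x : X) : ℝ := if hx : ∃ i, x ∈ S i then g hx.choose x else 0
  have f_eq (i : ι) : EqOn f (g i) (S i) := fun x hx ↦ by
    have hex : ∃ i, x ∈ S i := ⟨i, hx⟩
    simp only [f, dif_pos hex]
    exact eq_of_abs_sub_nonpos ((hg _ i x hex.choose_spec x hx).trans_eq (dist_self x))
  have hf : LipschitzOnWith 1 f (⋃ i, S i) := by
    refine LipschitzOnWith.of_dist_le_mul fun x hx y hy ↦ ?_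
    obtain ⟨i, hi⟩ := mem_iUnion.1 hx
    obtain ⟨j, hj⟩ := mem_iUnion.1 hy
    simpa only [f_eq i hi, f_eq j hj, Real.dist_eq, NNReal.coe_one, one_mul] using hg i j x hi y hj
  obtain ⟨h, hh, hfh⟩ := hf.extend_real
  exact ⟨h, hh, fun i x hx ↦ (hfh (mem_iUnion.2 ⟨i, hx⟩)).symm.trans (f_eq i hx)⟩

lemma exists_lipschitzWith_one_eqOn_of_two_mul_le_dist {S : ι → Set X} {g : ι → X → ℝ} {σ : ℝ}
    (hσ : 0 ≤ σ) (hg : ∀ i, LipschitzWith 1 (g i)) (hgσ : ∀ i x, |g i x| ≤ σ)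
    (hS : ∀ i j, i ≠ j → ∀ x ∈ S i, ∀ y ∈ S j, 2 * σ ≤ dist x y) :
    ∃ h : X → ℝ, LipschitzWith 1 h ∧ (∀ x, |h x| ≤ σ) ∧ ∀ i, EqOn h (g i) (S i) := by
  have abs_sub_le (i j : ι) (x : X) (hx : x ∈ S i) (y : X) (hy : y ∈ S j) :
      |g i x - g j y| ≤ dist x y := by
    rcases eq_or_ne i j with rfl | hij
    · simpa only [Real.dist_eq, NNReal.coe_one, one_mul] using (hg i).dist_le_mul x y
    · linarith [abs_sub (g i x) (g j y), hgσ i x, hgσ j y, hS i j hij x hx y hy]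
  obtain ⟨h, hh, heq⟩ := exists_lipschitzWith_one_eqOn abs_sub_le
  refine ⟨fun x ↦ max (-σ) (min σ (h x)), (hh.const_min σ).const_max (-σ), fun x ↦ ?_,
    fun i x hx ↦ ?_⟩
  · exact abs_le.2 ⟨le_max_left _ _, max_le (by linarith) (min_le_left _ _)⟩
  · obtain ⟨hl, hu⟩ := abs_le.1 (hgσ i x)
    simp only [heq i hx, min_eq_right hu, max_eq_right hl]

lemma exists_pos_forall_le_dist_of_isCompact [Finite ι] {Y : Type*} [MetricSpace Y]
    {S : ι → Set Y} (hS : ∀ i, IsCompact (S i)) (hdisj : Pairwise (Disjoint on S)) :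
    ∃ r > 0, ∀ i j, i ≠ j → ∀ x ∈ S i, ∀ y ∈ S j, r ≤ dist x y := by
  let P (i j : ι) : Set (Y × Y) := ⋃ _ : i ≠ j, S i ×ˢ S j
  have compact : IsCompact (⋃ i, ⋃ j, P i j) :=
    isCompact_iUnion fun i ↦ isCompact_iUnion fun j ↦ isCompact_iUnion fun _ ↦ (hS i).prod (hS j)
  obtain ⟨r, hr, hle⟩ := compact.exists_forall_le' continuous_dist.continuousOn
    (a := 0) fun p hp ↦ by
      simp only [P, mem_iUnion] at hp
      obtain ⟨i, j, hij, h₁, h₂⟩ := hp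
      exact dist_pos.2 ((hdisj hij).ne_of_mem h₁ h₂)
  refine ⟨r, hr, fun i j hij x hx y hy ↦ hle (x, y) ?_⟩
  simp only [P, mem_iUnion]
  exact ⟨i, j, hij, hx, hy⟩

end Glue

section InnerRegular

variable {Y ι : Type*} [TopologicalSpace Y] [MeasurableSpace Y]

lemma sum_measure_le_of_forall_isCompact [Fintype ι] {μ : Measure Y} [μ.InnerRegular]
    {A : ι → Set Y} (hA : ∀ k, MeasurableSet (A k)) {C : ℝ≥0∞}
    (h : ∀ K : ι → Set Y, (∀ k, IsCompact (K k)) → (∀ k, K k ⊆ A k) → ∑ k, μ (K k) ≤ C) :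
    ∑ k, μ (A k) ≤ C := by
  let 𝓚 := {K : ι → Set Y // ∀ k, IsCompact (K k) ∧ K k ⊆ A k}
  have measure_le (k : ι) : μ (A k) ≤ ⨆ K : 𝓚, μ (K.1 k) := by
    classical
    refine le_of_forall_lt fun r hr ↦ ?_
    obtain ⟨K, hKA, hK, hrK⟩ := (hA k).exists_lt_isCompact hr
    let K' : 𝓚 := ⟨update (fun _ ↦ ∅) k K, fun j ↦ by
      rcases eq_or_ne j k with rfl | hj
      · simpa only [update_self] using ⟨hK, hKA⟩
      · simp [update_of_ne hj]⟩
    exact hrK.trans_le (le_iSup_of_le K' (by simp only [K', update_self]; exact le_rfl))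
  have directed (K L : 𝓚) : ∃ M : 𝓚, ∀ k, μ (K.1 k) ≤ μ (M.1 k) ∧ μ (L.1 k) ≤ μ (M.1 k) :=
    ⟨⟨fun k ↦ K.1 k ∪ L.1 k, fun k ↦
      ⟨(K.2 k).1.union (L.2 k).1, union_subset (K.2 k).2 (L.2 k).2⟩⟩,
      fun k ↦ ⟨measure_mono subset_union_left, measure_mono subset_union_right⟩⟩
  calc ∑ k, μ (A k) ≤ ∑ k, ⨆ K : 𝓚, μ (K.1 k) := Finset.sum_le_sum fun k _ ↦ measure_le k
    _ = ⨆ K : 𝓚, ∑ k, μ (K.1 k) := ENNReal.finsetSum_iSup directed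
    _ ≤ C := iSup_le fun K ↦ h K.1 (fun k ↦ (K.2 k).1) fun k ↦ (K.2 k).2

end InnerRegular

section Waves

lemma deriv_eq_of_eqOn_of_accPt {𝕜 E : Type*} [NontriviallyNormedField 𝕜] [NormedAddCommGroup E]
    [NormedSpace 𝕜 E] {u w : 𝕜 → E} {K : Set 𝕜} {t : 𝕜} (huw : EqOn u w K) (ht : t ∈ K)
    (hacc : AccPt t (𝓟 K)) (hu : DifferentiableAt 𝕜 u t) (hw : DifferentiableAt 𝕜 w t) :
    deriv u t = deriv w t :=
  hacc.uniqueDiffWithinAt.eq_deriv K hu.hasDerivAt.hasDerivWithinAt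
    (hw.hasDerivAt.hasDerivWithinAt.congr huw (huw ht))

variable {σ : ℝ}

lemma hasDerivAt_mul_comp_div {f w : ℝ → ℝ} {f' w' t : ℝ} (hσ : σ ≠ 0) (hf : HasDerivAt f f' t)
    (hw : HasDerivAt w w' (f t / σ)) : HasDerivAt (fun s ↦ σ * w (f s / σ)) (w' * f') t := by
  convert! (hw.comp t (hf.div_const σ)).const_mul σ using 1
  field_simp

lemma one_le_abs_sin_add_abs_cos (θ : ℝ) : 1 ≤ |Real.sin θ| + |Real.cos θ| := by
  have h := Real.sin_sq_add_cos_sq θ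
  rw [← sq_abs (Real.sin θ), ← sq_abs (Real.cos θ)] at h
  nlinarith [abs_nonneg (Real.sin θ), abs_nonneg (Real.cos θ)]

lemma enorm_deriv_le_of_eqOn_sin_of_eqOn_cos {f u v : ℝ → ℝ} {K : Set ℝ} {t : ℝ} (hσ : σ ≠ 0)
    (hu : EqOn u (fun s ↦ σ * Real.sin (f s / σ)) K)
    (hv : EqOn v (fun s ↦ σ * Real.cos (f s / σ)) K) (ht : t ∈ K) (hacc : AccPt t (𝓟 K))
    (hft : DifferentiableAt ℝ f t) (hut : DifferentiableAt ℝ u t) (hvt : DifferentiableAt ℝ v t) :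
    ‖deriv f t‖ₑ ≤ ‖deriv u t‖ₑ + ‖deriv v t‖ₑ := by
  have hsin := hasDerivAt_mul_comp_div hσ hft.hasDerivAt (Real.hasDerivAt_sin (f t / σ))
  have hcos := hasDerivAt_mul_comp_div hσ hft.hasDerivAt (Real.hasDerivAt_cos (f t / σ))
  rw [deriv_eq_of_eqOn_of_accPt hu ht hacc hut hsin.differentiableAt, hsin.deriv,
    deriv_eq_of_eqOn_of_accPt hv ht hacc hvt hcos.differentiableAt, hcos.deriv, enorm_mul,
    enorm_mul, enorm_neg, ← add_mul, add_comm]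
  refine le_mul_of_one_le_left' ?_
  simp only [enorm_eq_nnnorm]
  exact_mod_cast one_le_abs_sin_add_abs_cos (f t / σ)

lemma ae_enorm_deriv_le_of_eqOn_sin_of_eqOn_cos {f u v : ℝ → ℝ} {K : Set ℝ} (hσ : σ ≠ 0)
    (hu : EqOn u (fun s ↦ σ * Real.sin (f s / σ)) K)
    (hv : EqOn v (fun s ↦ σ * Real.cos (f s / σ)) K)
    (hft : ∀ᵐ t, t ∈ K → DifferentiableAt ℝ f t) (hut : ∀ᵐ t, t ∈ K → DifferentiableAt ℝ u t)
    (hvt : ∀ᵐ t, t ∈ K → DifferentiableAt ℝ v t) :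
    ∀ᵐ t, t ∈ K → ‖deriv f t‖ₑ ≤ ‖deriv u t‖ₑ + ‖deriv v t‖ₑ := by
  filter_upwards [hft, hut, hvt, (countable_setOf_not_accPt K).ae_notMem volume]
    with t hft hut hvt hacc ht
  exact enorm_deriv_le_of_eqOn_sin_of_eqOn_cos hσ hu hv ht (by_contra fun h ↦ hacc ⟨ht, h⟩)
    (hft ht) (hut ht) (hvt ht)

variable {X : Type*} [PseudoMetricSpace X]

lemma lipschitzWith_one_mul_comp_div {w : ℝ → ℝ} {g : X → ℝ} (hσ : 0 < σ)
    (hw : LipschitzWith 1 w) (hg : LipschitzWith 1 g) :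
    LipschitzWith 1 (fun x ↦ σ * w (g x / σ)) := by
  refine LipschitzWith.of_dist_le_mul fun x y ↦ ?_
  rw [NNReal.coe_one, one_mul, Real.dist_eq, ← mul_sub, abs_mul, abs_of_pos hσ]
  calc σ * |w (g x / σ) - w (g y / σ)|
      ≤ σ * |g x / σ - g y / σ| := by
        gcongr σ * ?_
        simpa only [Real.dist_eq, NNReal.coe_one, one_mul] using hw.dist_le_mul (g x / σ) (g y / σ)
    _ = |g x - g y| := by rw [← sub_div, abs_div, abs_of_pos hσ, mul_div_cancel₀ _ hσ.ne']
    _ ≤ dist x y := by simpa only [Real.dist_eq, NNReal.coe_one, one_mul] using hg.dist_le_mul x y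

lemma exists_lipschitzWith_one_eqOn_mul_comp_div {ι : Type*} {S : ι → Set X} {φ : ι → X → ℝ}
    {w : ℝ → ℝ} (hσ : 0 < σ) (hw : LipschitzWith 1 w) (hw1 : ∀ x, |w x| ≤ 1)
    (hφ : ∀ i, LipschitzWith 1 (φ i))
    (hS : ∀ i j, i ≠ j → ∀ x ∈ S i, ∀ y ∈ S j, 2 * σ ≤ dist x y) :
    ∃ h : X → ℝ, LipschitzWith 1 h ∧ (∀ x, |h x| ≤ σ) ∧
      ∀ i, EqOn h (fun x ↦ σ * w (φ i x / σ)) (S i) :=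
  exists_lipschitzWith_one_eqOn_of_two_mul_le_dist hσ.le
    (fun i ↦ lipschitzWith_one_mul_comp_div hσ hw (hφ i))
    (fun i x ↦ by
      rw [abs_mul, abs_of_pos hσ]
      exact mul_le_of_le_one_right hσ.le (hw1 _)) hS

end Waves

section CompactPieces

variable {ι : Type*} [Fintype ι] [LinearOrder ι] [LocallyFiniteOrderBot ι] {s : Set ℝ} {C : ℝ≥0∞}

theorem lintegral_enorm_deriv_le_of_forall_isCompact (G : ℝ → ι → ℝ) (hs : MeasurableSet s)
    (hC : ∀ K : ι → Set ℝ, (∀ k, IsCompact (K k)) → (∀ k, K k ⊆ s) →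
      Pairwise (Disjoint on fun k ↦ G '' K k) →
      ∑ k, ∫⁻ t in K k, ‖deriv (fun t ↦ G t k) t‖ₑ ≤ C) :
    ∫⁻ t in s, ‖deriv G t‖ₑ ≤ C := by
  obtain ⟨A, hA, hdisj, hderiv, hcover⟩ := exists_separated_partition_of_deriv_ne_zero G
  let ν := volume.withDensity fun t ↦ ‖deriv G t‖ₑ
  have : SigmaFinite ν := SigmaFinite.withDensity_of_ne_top (ae_of_all _ fun _ ↦ enorm_ne_top)
  have ae_mem : ∀ᵐ t ∂ν, t ∈ ⋃ k, A k :=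
    (ae_withDensity_iff (measurable_deriv G).enorm).2
      (hcover.mono fun t ht h0 ↦ ht (enorm_ne_zero.1 h0))
  have compact_le (K : ι → Set ℝ) (hK : ∀ k, IsCompact (K k)) (hKA : ∀ k, K k ⊆ s ∩ A k) :
      ∑ k, ν (K k) ≤ C := by
    refine le_trans (Finset.sum_le_sum fun k _ ↦ ?_) <|
      hC K hK (fun k ↦ (hKA k).trans inter_subset_left) fun k l hkl ↦
        (hdisj hkl).mono (image_mono ((hKA k).trans inter_subset_right))
          (image_mono ((hKA l).trans inter_subset_right))
    rw [withDensity_apply _ (hK k).measurableSet]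
    refine setLIntegral_mono' (hK k).measurableSet fun t ht ↦ ?_
    obtain ⟨hdiff, hnorm⟩ := hderiv k t (hKA k ht).2
    rw [enorm_le_iff_norm_le, ← hnorm, deriv_pi (differentiableAt_pi.1 hdiff)]
  calc ∫⁻ t in s, ‖deriv G t‖ₑ = ν s := (withDensity_apply _ hs).symm
    _ ≤ ν (⋃ k, s ∩ A k) := measure_mono_ae <| ae_mem.mono fun t ht hts ↦ by
        rw [← inter_iUnion]
        exact ⟨hts, ht⟩
    _ ≤ ∑ k, ν (s ∩ A k) := measure_iUnion_fintype_le _ _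
    _ ≤ C := sum_measure_le_of_forall_isCompact (fun k ↦ hs.inter (hA k)) compact_le

end CompactPieces

section VectorCurve

variable {X ι : Type*} [PseudoMetricSpace X] [Fintype ι] {γ : ℝ → X} {a b : ℝ} {C : ℝ≥0∞}
  {φ : ι → X → ℝ}

theorem sum_lintegral_enorm_deriv_comp_le_of_separated
    (hγ : ∀ h : X → ℝ, LipschitzWith 1 h → BoundedVariationOn (h ∘ γ) (uIcc a b))
    (hC : ∀ h : X → ℝ, LipschitzWith 1 h → (∀ x, |h x| ≤ 1) → eVariationOn (h ∘ γ) (uIcc a b) ≤ C)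
    (hφ : ∀ k, LipschitzWith 1 (φ k)) {K : ι → Set ℝ} (hK : ∀ k, MeasurableSet (K k))
    (hKab : ∀ k, K k ⊆ uIcc a b) {r : ℝ} (hr : 0 < r)
    (hsep : ∀ k l, k ≠ l → ∀ s ∈ K k, ∀ t ∈ K l, r ≤ dist (γ s) (γ t)) :
    ∑ k, ∫⁻ t in K k, ‖deriv (φ k ∘ γ) t‖ₑ ≤ 2 * C := by
  let σ := min 1 (r / 2)
  have hσ : 0 < σ := lt_min one_pos (half_pos hr)
  have image_sep (k l : ι) (hkl : k ≠ l) : ∀ x ∈ γ '' K k, ∀ y ∈ γ '' K l, 2 * σ ≤ dist x y := by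
    rintro _ ⟨s, hs, rfl⟩ _ ⟨t, ht, rfl⟩
    linarith [hsep k l hkl s hs t ht, min_le_right 1 (r / 2)]
  obtain ⟨u, hu, hu1, hu_eq⟩ := exists_lipschitzWith_one_eqOn_mul_comp_div hσ
    Real.lipschitzWith_sin Real.abs_sin_le_one hφ image_sep
  obtain ⟨v, hv, hv1, hv_eq⟩ := exists_lipschitzWith_one_eqOn_mul_comp_div hσ
    Real.lipschitzWith_cos Real.abs_cos_le_one hφ image_sep
  have disjoint : Pairwise (Disjoint on K) := fun k l hkl ↦ disjoint_left.2 fun t hk hl ↦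
    hr.not_ge ((hsep k l hkl t hk t hl).trans_eq (dist_self _))
  have lintegral_le (h : X → ℝ) (hh : LipschitzWith 1 h) (hhσ : ∀ x, |h x| ≤ σ) :
      ∫⁻ t in uIcc a b, ‖deriv (h ∘ γ) t‖ₑ ≤ C :=
    (lintegral_enorm_deriv_le_eVariationOn _ _ _).trans
      (hC h hh fun x ↦ (hhσ x).trans (min_le_left _ _))
  have differentiableAt {h : X → ℝ} (hh : LipschitzWith 1 h) (k : ι) :
      ∀ᵐ t, t ∈ K k → DifferentiableAt ℝ (h ∘ γ) t :=
    (hγ h hh).ae_differentiableAt_of_mem_uIcc.mono fun t ht htk ↦ ht (hKab k htk)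
  have enorm_deriv_le (k : ι) : ∀ᵐ t, t ∈ K k →
      ‖deriv (φ k ∘ γ) t‖ₑ ≤ ‖deriv (u ∘ γ) t‖ₑ + ‖deriv (v ∘ γ) t‖ₑ :=
    ae_enorm_deriv_le_of_eqOn_sin_of_eqOn_cos hσ.ne' (fun s hs ↦ hu_eq k (mem_image_of_mem γ hs))
      (fun s hs ↦ hv_eq k (mem_image_of_mem γ hs)) (differentiableAt (hφ k) k)
      (differentiableAt hu k) (differentiableAt hv k)
  calc ∑ k, ∫⁻ t in K k, ‖deriv (φ k ∘ γ) t‖ₑ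
      ≤ ∑ k, ∫⁻ t in K k, (‖deriv (u ∘ γ) t‖ₑ + ‖deriv (v ∘ γ) t‖ₑ) :=
        Finset.sum_le_sum fun k _ ↦ setLIntegral_mono_ae' (hK k) (enorm_deriv_le k)
    _ = ∫⁻ t in ⋃ k, K k, (‖deriv (u ∘ γ) t‖ₑ + ‖deriv (v ∘ γ) t‖ₑ) := by
        rw [lintegral_iUnion hK disjoint, tsum_fintype]
    _ ≤ ∫⁻ t in uIcc a b, (‖deriv (u ∘ γ) t‖ₑ + ‖deriv (v ∘ γ) t‖ₑ) :=
        lintegral_mono_set (iUnion_subset hKab)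
    _ = (∫⁻ t in uIcc a b, ‖deriv (u ∘ γ) t‖ₑ) + ∫⁻ t in uIcc a b, ‖deriv (v ∘ γ) t‖ₑ :=
        lintegral_add_left (measurable_deriv _).enorm _
    _ ≤ 2 * C := (add_le_add (lintegral_le u hu hu1) (lintegral_le v hv hv1)).trans_eq
        (two_mul C).symm

theorem lintegral_enorm_deriv_pi_comp_le [LinearOrder ι] [LocallyFiniteOrderBot ι]
    (hcont : ContinuousOn γ (uIcc a b))
    (hγ : ∀ h : X → ℝ, LipschitzWith 1 h → BoundedVariationOn (h ∘ γ) (uIcc a b))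
    (hC : ∀ h : X → ℝ, LipschitzWith 1 h → (∀ x, |h x| ≤ 1) → eVariationOn (h ∘ γ) (uIcc a b) ≤ C)
    (hφ : ∀ k, LipschitzWith 1 (φ k)) :
    ∫⁻ t in uIcc a b, ‖deriv (fun t k ↦ φ k (γ t)) t‖ₑ ≤ 2 * C := by
  let G (t : ℝ) (k : ι) : ℝ := φ k (γ t)
  have hG : ContinuousOn G (uIcc a b) :=
    continuousOn_pi.2 fun k ↦ (hφ k).continuous.comp_continuousOn hcont
  have dist_le (s t : ℝ) : dist (G s) (G t) ≤ dist (γ s) (γ t) :=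
    (dist_pi_le_iff dist_nonneg).2 fun k ↦ by
      simpa only [NNReal.coe_one, one_mul] using (hφ k).dist_le_mul (γ s) (γ t)
  refine lintegral_enorm_deriv_le_of_forall_isCompact G measurableSet_Icc fun K hK hKab hdisj ↦ ?_
  obtain ⟨r, hr, hsep⟩ := exists_pos_forall_le_dist_of_isCompact
    (fun k ↦ (hK k).image_of_continuousOn (hG.mono (hKab k))) hdisj
  exact sum_lintegral_enorm_deriv_comp_le_of_separated hγ hC hφ (fun k ↦ (hK k).measurableSet)
    hKab hr fun k l hkl s hs t ht ↦
      (hsep k l hkl _ (mem_image_of_mem G hs) _ (mem_image_of_mem G ht)).trans (dist_le s t)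

end VectorCurve

section CountableFamily

variable {X : Type*} [PseudoMetricSpace X] {γ : ℝ → X} {a b : ℝ} {C : ℝ≥0∞} {φ : ℕ → X → ℝ}

theorem lintegral_iSup_enorm_deriv_comp_le (hcont : ContinuousOn γ (uIcc a b))
    (hγ : ∀ h : X → ℝ, LipschitzWith 1 h → BoundedVariationOn (h ∘ γ) (uIcc a b))
    (hC : ∀ h : X → ℝ, LipschitzWith 1 h → (∀ x, |h x| ≤ 1) → eVariationOn (h ∘ γ) (uIcc a b) ≤ C)
    (hφ : ∀ k, LipschitzWith 1 (φ k)) :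
    ∫⁻ t in uIcc a b, ⨆ k, ‖deriv (φ k ∘ γ) t‖ₑ ≤ 2 * C := by
  let F (k : ℕ) (t : ℝ) : ℝ≥0∞ := ‖deriv (φ k ∘ γ) t‖ₑ
  let G (n : ℕ) (t : ℝ) (k : Fin (n + 1)) : ℝ := φ k (γ t)
  have measurable (n : ℕ) : Measurable (partialSups F n) := by
    rw [partialSups_apply]
    exact Finset.measurable_sup' _ fun k _ ↦ (measurable_deriv _).enorm
  have partialSups_le (n : ℕ) : ∀ᵐ t, t ∈ uIcc a b → partialSups F n t ≤ ‖deriv (G n) t‖ₑ := by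
    have := ae_all_iff.2 fun k ↦ (hγ (φ k) (hφ k)).ae_differentiableAt_of_mem_uIcc
    filter_upwards [this] with t ht htab
    rw [Pi.partialSups_apply]
    refine partialSups_le _ _ _ fun k hk ↦ ?_
    have deriv_G : deriv (G n) t = fun k : Fin (n + 1) ↦ deriv (φ k ∘ γ) t :=
      deriv_pi fun k ↦ ht k htab
    rw [enorm_le_iff_norm_le, deriv_G]
    exact norm_le_pi_norm (fun k : Fin (n + 1) ↦ deriv (φ k ∘ γ) t) ⟨k, Nat.lt_succ_iff.2 hk⟩
  calc ∫⁻ t in uIcc a b, ⨆ k, F k t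
      = ∫⁻ t in uIcc a b, ⨆ n, partialSups F n t := by
        simp_rw [Pi.partialSups_apply, iSup_partialSups_eq]
    _ = ⨆ n, ∫⁻ t in uIcc a b, partialSups F n t :=
        lintegral_iSup measurable (partialSups_monotone F)
    _ ≤ 2 * C := iSup_le fun n ↦ by
        refine (setLIntegral_mono_ae' measurableSet_Icc (partialSups_le n)).trans ?_
        exact lintegral_enorm_deriv_pi_comp_le hcont hγ hC fun k ↦ hφ k

end CountableFamily

section AbsolutelyContinuous

variable {X : Type*} [PseudoMetricSpace X] {γ : ℝ → X} {a b : ℝ}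

lemma exists_seq_forall_edist_le_iSup_edist_dist {s : Set X} (hs : TopologicalSpace.IsSeparable s)
    (hne : s.Nonempty) :
    ∃ x : ℕ → X, ∀ y ∈ s, ∀ z, edist y z ≤ ⨆ k, edist (dist y (x k)) (dist z (x k)) := by
  obtain ⟨T, -, hT, hsT⟩ := hs.exists_countable_dense_subset
  obtain ⟨x, rfl⟩ := hT.exists_eq_range (closure_nonempty_iff.1 (hne.mono hsT))
  refine ⟨x, fun y hy z ↦ ENNReal.le_of_forall_pos_le_add fun ε hε _ ↦ ?_⟩
  obtain ⟨_, ⟨k, rfl⟩, hk⟩ := Metric.mem_closure_iff.1 (hsT hy) (ε / 2) (half_pos hε)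
  have dist_le : dist y z ≤ dist (dist y (x k)) (dist z (x k)) + ε := by
    rw [Real.dist_eq]
    linarith [dist_triangle_right y z (x k), neg_abs_le (dist y (x k) - dist z (x k))]
  calc edist y z ≤ edist (dist y (x k)) (dist z (x k)) + ε := by
        rw [edist_dist, edist_dist, ← ENNReal.ofReal_coe_nnreal,
          ← ENNReal.ofReal_add dist_nonneg ε.coe_nonneg]
        exact ENNReal.ofReal_le_ofReal dist_le
    _ ≤ (⨆ k, edist (dist y (x k)) (dist z (x k))) + ε := by
        gcongr
        exact le_iSup (fun k ↦ edist (dist y (x k)) (dist z (x k))) k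

lemma continuousOn_of_forall_continuousOn_dist {α : Type*} [TopologicalSpace α] {f : α → X}
    {s : Set α} (hf : ∀ x, ContinuousOn (fun t ↦ dist (f t) x) s) : ContinuousOn f s :=
  fun t ht ↦ tendsto_iff_dist_tendsto_zero.2 <| by
    simpa only [dist_self] using (hf (f t) t ht).tendsto

lemma edist_le_lintegral_enorm_deriv {f : ℝ → ℝ} (hf : AbsolutelyContinuousOnInterval f a b)
    {c d : ℝ} (hc : c ∈ uIcc a b) (hd : d ∈ uIcc a b) :
    edist (f c) (f d) ≤ ∫⁻ t in uIoc c d, ‖deriv f t‖ₑ := by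
  rw [edist_comm, edist_eq_enorm_sub, ← (hf.mono (uIcc_subset_uIcc hc hd)).integral_deriv_eq_sub,
    ← ofReal_norm, intervalIntegral.norm_integral_eq_norm_integral_uIoc, ofReal_norm]
  exact enorm_integral_le_lintegral_enorm _

open AbsolutelyContinuousOnInterval in
lemma absolutelyContinuousOnInterval_of_edist_le_lintegral {m : ℝ → ℝ≥0∞}
    (hm : ∫⁻ t in uIoc a b, m t ≠ ∞)
    (hγ : ∀ c ∈ uIcc a b, ∀ d ∈ uIcc a b, edist (γ c) (γ d) ≤ ∫⁻ t in uIoc c d, m t) :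
    AbsolutelyContinuousOnInterval γ a b := by
  let U (E : ℕ × (ℕ → ℝ × ℝ)) : Set ℝ := ⋃ i ∈ Finset.range E.1, uIoc (E.2 i).1 (E.2 i).2
  have lintegral_tendsto : Tendsto (fun E ↦ ∫⁻ t in U E, m t ∂volume.restrict (uIoc a b))
      (totalLengthFilter ⊓ 𝓟 (disjWithin a b)) (𝓝 0) :=
    tendsto_setLIntegral_zero hm <|
      tendsto_volume_restrict_totalLengthFilter_disjWithin_nhds_zero a b
  have sum_edist_le : ∀ E ∈ disjWithin a b,
      ∑ i ∈ Finset.range E.1, edist (γ (E.2 i).1) (γ (E.2 i).2) ≤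
        ∫⁻ t in U E, m t ∂volume.restrict (uIoc a b) := by
    intro E hE
    rw [Measure.restrict_restrict_of_subset (biUnion_uIoc_subset_of_mem_disjWithin hE),
      lintegral_biUnion_finset hE.2 fun _ _ ↦ measurableSet_uIoc]
    exact Finset.sum_le_sum fun i hi ↦ hγ _ (hE.1 i hi).1 _ (hE.1 i hi).2
  have sum_edist_tendsto := tendsto_of_tendsto_of_tendsto_of_le_of_le' tendsto_const_nhds
    lintegral_tendsto (Eventually.of_forall fun _ ↦ zero_le)
    (eventually_inf_principal.2 (Eventually.of_forall sum_edist_le))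
  have := (ENNReal.tendsto_toReal ENNReal.zero_ne_top).comp sum_edist_tendsto
  refine this.congr fun E ↦ ?_
  simp only [comp_apply, ENNReal.toReal_sum fun _ _ ↦ edist_ne_top _ _, dist_edist]

theorem absolutelyContinuous_of_comp_lipschitz_general
    (H : ∀ h : X → ℝ, LipschitzWith 1 h → AbsolutelyContinuousOnInterval (h ∘ γ) a b) :
    AbsolutelyContinuousOnInterval γ a b := by
  have hcont : ContinuousOn γ (uIcc a b) := continuousOn_of_forall_continuousOn_dist fun x ↦
    (H _ (LipschitzWith.dist_left x)).continuousOn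
  have hγ (h : X → ℝ) (hh : LipschitzWith 1 h) : BoundedVariationOn (h ∘ γ) (uIcc a b) :=
    (H h hh).boundedVariationOn
  obtain ⟨C, hC⟩ := exists_forall_eVariationOn_comp_le hγ
    (g := fun h : {h : X → ℝ // LipschitzWith 1 h ∧ ∀ x, ‖h x‖ ≤ 1} ↦ h)
    (fun h ↦ h.2.1) fun h ↦ h.2.2
  obtain ⟨x, hx⟩ := exists_seq_forall_edist_le_iSup_edist_dist
    (isCompact_uIcc.image_of_continuousOn hcont).isSeparable (nonempty_uIcc.image γ)
  let φ (k : ℕ) (y : X) : ℝ := dist y (x k)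
  have hφ (k : ℕ) : LipschitzWith 1 (φ k) := LipschitzWith.dist_left (x k)
  let m (t : ℝ) : ℝ≥0∞ := ⨆ k, ‖deriv (φ k ∘ γ) t‖ₑ
  have lintegral_le : ∫⁻ t in uIcc a b, m t ≤ 2 * C :=
    lintegral_iSup_enorm_deriv_comp_le hcont hγ (fun h hh hh1 ↦ hC ⟨h, hh, hh1⟩) hφ
  have edist_le (k : ℕ) {c d : ℝ} (hc : c ∈ uIcc a b) (hd : d ∈ uIcc a b) :
      edist (φ k (γ c)) (φ k (γ d)) ≤ ∫⁻ t in uIoc c d, m t :=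
    (edist_le_lintegral_enorm_deriv (H _ (hφ k)) hc hd).trans
      (lintegral_mono fun t ↦ le_iSup (fun k ↦ ‖deriv (φ k ∘ γ) t‖ₑ) k)
  have lintegral_ne_top : ∫⁻ t in uIoc a b, m t ≠ ∞ := ne_top_of_le_ne_top
    (by finiteness) ((lintegral_mono_set uIoc_subset_uIcc).trans lintegral_le)
  exact absolutelyContinuousOnInterval_of_edist_le_lintegral lintegral_ne_top fun c hc d hd ↦
    (hx _ (mem_image_of_mem γ hc) _).trans (iSup_le fun k ↦ edist_le k hc hd)

end AbsolutelyContinuous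

/-- If `γ : [a,b] → X` is continuous and for every Lipschitz function `h : X → ℝ`
the composition `h ∘ γ` is absolutely continuous, then `γ` itself is absolutely
continuous. -/
theorem absolutelyContinuous_of_comp_lipschitz {X : Type*} [MetricSpace X]
    (a b : ℝ) (γ : ℝ → X) (hγ : ContinuousOn γ (Set.Icc a b))
    (H : ∀ h : X → ℝ, (∃ L : ℝ, 0 ≤ L ∧ ∀ x y : X, |h x - h y| ≤ L * dist x y) →
      AbsContOn (h ∘ γ) a b) :
    AbsContOn γ a b := by
  rcases lt_or_ge b a with hba | hab
  · exact AbsContOn.of_lt hba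
  · exact AbsContOn.of_absolutelyContinuousOnInterval <|
      absolutelyContinuous_of_comp_lipschitz_general fun h hh ↦
        (H h ⟨1, zero_le_one, hh.dist_le_mul⟩).absolutelyContinuousOnInterval hab
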